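/- With notation as in the unit-lattice setup: for η_j units generating U_{𝔮₁} modulo roots of unity, m_j = max_i ⌈log|σ_i(η_j)|⌉, and α ∈ K nonzero, one has ∫_{ℝ^r} dx₁⋯dx_r / (max_{1≤i≤r+1} (∏_{j=1}^r |σ_i(η_j)|^{x_j/m_j}·|σ_i(α)|))^{n−1} = (m₁⋯m_r / (R_{K,𝔮₁}·|N(α)|^{(n−1)/n}))·(n/(n−1))^r. -/

import Mathlib

open NumberField NumberField.Units NumberField.InfinitePlace

/-!
By the product formula, the integrand is `exp (-a f)` with `f = maxᵢ yᵢ` a maximum of affine forms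
for which `∑ pᵢ yᵢ` is a constant `C`, the `pᵢ` being the local degrees. After one index `i₀` is
dropped, the slack variables `uᵢ = pᵢ (s - yᵢ)` identify `{f ≤ s}` with the simplex
`{u ≥ 0, C + ∑ uᵢ ≤ s ∑ pᵢ}`, a sublevel set of the linear function `(C + ∑ uᵢ) / ∑ pᵢ` on the
orthant. The translation depends on `s` but preserves volume, so `f` has the distribution of this
linear function up to the Jacobian factor, and the integral is that of an exponential over an
orthant, a product of one-dimensional integrals.
-/

section Measure

open MeasureTheory Matrix

theorem integral_exp_neg_mul_eq_of_measure_sublevel_eq {X Y : Type*} [MeasurableSpace X]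
    [MeasurableSpace Y] {μ : Measure X} {ν : Measure Y} {f : X → ℝ} {g : Y → ℝ}
    (hf : Measurable f) (hg : Measurable g) (h : ∀ s, μ {x | f x ≤ s} = ν {y | g y ≤ s})
    {a : ℝ} (ha : 0 < a) :
    ∫ x, Real.exp (-(a * f x)) ∂μ = ∫ y, Real.exp (-(a * g y)) ∂ν := by
  have superlevel {t : ℝ} (ht : 0 < t) (z : ℝ) :
      t ≤ Real.exp (-(a * z)) ↔ z ≤ -Real.log t / a := by
    rw [← Real.log_le_iff_le_exp ht, le_div_iff₀' ha, le_neg]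
  have nonneg_f : 0 ≤ᵐ[μ] fun x => Real.exp (-(a * f x)) := .of_forall fun _ => Real.exp_nonneg _
  have nonneg_g : 0 ≤ᵐ[ν] fun y => Real.exp (-(a * g y)) := .of_forall fun _ => Real.exp_nonneg _
  rw [integral_eq_lintegral_of_nonneg_ae nonneg_f (by fun_prop),
    integral_eq_lintegral_of_nonneg_ae nonneg_g (by fun_prop),
    lintegral_eq_lintegral_meas_le _ nonneg_f (by fun_prop),
    lintegral_eq_lintegral_meas_le _ nonneg_g (by fun_prop)]
  congr 1
  refine setLIntegral_congr_fun measurableSet_Ioi fun t ht => ?_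
  simp only [superlevel ht, h]

theorem integral_Ici_exp_neg_mul_sum {κ : Type*} [Fintype κ] {b : ℝ} (hb : 0 < b) :
    ∫ u in Set.Ici (0 : κ → ℝ), Real.exp (-(b * ∑ k, u k)) = b⁻¹ ^ Fintype.card κ := by
  have one_dim : ∫ y in Set.Ici (0 : ℝ), Real.exp (-b * y) = b⁻¹ := by
    rw [integral_Ici_eq_integral_Ioi, integral_exp_mul_Ioi (neg_lt_zero.mpr hb)]
    simp [neg_div_neg_eq]
  simp_rw [Finset.mul_sum, ← Finset.sum_neg_distrib, Real.exp_sum, ← neg_mul]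
  rw [← Set.pi_univ_Ici, volume_pi, Measure.restrict_pi_pi]
  exact (integral_fintype_prod_eq_pow (μ := volume.restrict (Set.Ici (0 : ℝ)))
    fun y => Real.exp (-b * y)).trans (by rw [one_dim])

theorem volume_preimage_const_sub_vecMul {κ : Type*} [Fintype κ] [DecidableEq κ] {B : Matrix κ κ ℝ}
    (hB : B.det ≠ 0) (v : κ → ℝ) (s : Set (κ → ℝ)) :
    volume ((fun x => v - x ᵥ* B) ⁻¹' s) = ENNReal.ofReal |B.det|⁻¹ * volume s := by
  have hdet : LinearMap.det (toLin' Bᵀ) = B.det := by rw [LinearMap.det_toLin', det_transpose]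
  calc volume ((fun x => v - x ᵥ* B) ⁻¹' s)
      = volume (toLin' Bᵀ ⁻¹' (MeasurableEquiv.subLeft v ⁻¹' s)) := by
        congr 1
        ext x
        simp only [Set.mem_preimage, toLin'_apply, mulVec_transpose]
        rfl
    _ = ENNReal.ofReal |B.det|⁻¹ * volume (MeasurableEquiv.subLeft v ⁻¹' s) := by
        rw [Measure.addHaar_preimage_linearMap _ (hdet ▸ hB), hdet, abs_inv]
    _ = ENNReal.ofReal |B.det|⁻¹ * volume s := by
        rw [MeasurePreserving.measure_preimage_equiv (Measure.measurePreserving_sub_left volume v)]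

end Measure

section MaxOfAffineForms

open MeasureTheory Matrix

variable {ι κ : Type*} {i₀ : ι}

theorem sum_eq_add_sum_equiv_symm [Fintype ι] [Fintype κ] {M : Type*} [AddCommMonoid M]
    (e : {i // i ≠ i₀} ≃ κ) (f : ι → M) : ∑ i, f i = f i₀ + ∑ k, f (e.symm k) := by
  classical
  rw [Fintype.sum_eq_add_sum_subtype_ne f i₀, ← Equiv.sum_comp e.symm]

theorem forall_iff_and_forall_equiv_symm (e : {i // i ≠ i₀} ≃ κ) (P : ι → Prop) :
    (∀ i, P i) ↔ P i₀ ∧ ∀ k, P (e.symm k) := by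
  rw [← e.forall_congr_right (q := fun k => P (e.symm k))]
  simp only [Equiv.symm_apply_apply, Subtype.forall]
  exact ⟨fun h => ⟨h i₀, fun i _ => h i⟩, fun h i => (eq_or_ne i i₀).elim (· ▸ h.1) (h.2 i)⟩

/-- The maximal minor `(p i * L j i)`, `i ≠ i₀`, of the matrix of weighted linear forms; `e` makes
it a square matrix by renaming its columns. It is the linear part of the change to slack
variables. -/
noncomputable def weightedMinor (p : ι → ℝ) (L : Matrix κ ι ℝ) (e : {i // i ≠ i₀} ≃ κ) :
    Matrix κ κ ℝ :=
  of fun j k => p (e.symm k) * L j (e.symm k)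

variable [Fintype ι] [Fintype κ] {p : ι → ℝ} {L : Matrix κ ι ℝ}

theorem forall_affine_le_iff (hp : ∀ i, 0 < p i) (hL : L *ᵥ p = 0) (c : ι → ℝ)
    (e : {i // i ≠ i₀} ≃ κ) (x : κ → ℝ) (s : ℝ) :
    (∀ i, (x ᵥ* L + c) i ≤ s) ↔
      (fun k => p (e.symm k) * (s - c (e.symm k))) - x ᵥ* weightedMinor p L e ∈
        {u : κ → ℝ | (c ⬝ᵥ p + ∑ k, u k) / ∑ i, p i ≤ s} ∩ Set.Ici 0 := by
  set y := x ᵥ* L + c with hy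
  have slack : (fun k => p (e.symm k) * (s - c (e.symm k))) - x ᵥ* weightedMinor p L e =
      fun k : κ => p (e.symm k) * (s - y (e.symm k)) := by
    funext k
    simp only [weightedMinor, Pi.sub_apply, Pi.add_apply, hy, vecMul, dotProduct, of_apply,
      mul_left_comm _ (p _), ← Finset.mul_sum]
    ring
  have weighted_sum : c ⬝ᵥ p = ∑ i, p i * y i := calc
    c ⬝ᵥ p = y ⬝ᵥ p := by
      rw [hy, add_dotProduct, ← dotProduct_mulVec, hL, dotProduct_zero, zero_add]
    _ = ∑ i, p i * y i := by simp only [dotProduct, mul_comm]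
  have weighted_sum_add_slack : (c ⬝ᵥ p + ∑ k, p (e.symm k) * (s - y (e.symm k))) =
      s * ∑ i, p i - p i₀ * (s - y i₀) := by
    rw [weighted_sum, sum_eq_add_sum_equiv_symm e, sum_eq_add_sum_equiv_symm e p]
    simp only [mul_sub, Finset.sum_sub_distrib, ← Finset.sum_mul]
    ring
  have sum_pos : 0 < ∑ i, p i := Finset.sum_pos (fun i _ => hp i) ⟨i₀, Finset.mem_univ _⟩
  rw [slack, forall_iff_and_forall_equiv_symm e, Set.mem_inter_iff, Set.mem_ofPred_eq, Set.mem_Ici,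
    Pi.le_def, weighted_sum_add_slack, div_le_iff₀ sum_pos, sub_le_self_iff]
  simp only [Pi.zero_apply, mul_nonneg_iff_of_pos_left (hp _), sub_nonneg]

theorem volume_sup_affine_le [Nonempty ι] [DecidableEq κ] (hp : ∀ i, 0 < p i)
    (hL : L *ᵥ p = 0) (c : ι → ℝ) (e : {i // i ≠ i₀} ≃ κ) (hdet : (weightedMinor p L e).det ≠ 0)
    (s : ℝ) :
    volume {x : κ → ℝ | Finset.univ.sup' Finset.univ_nonempty (x ᵥ* L + c) ≤ s} =
      (ENNReal.ofReal |(weightedMinor p L e).det|⁻¹ • volume.restrict (Set.Ici (0 : κ → ℝ)))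
        {u | (c ⬝ᵥ p + ∑ k, u k) / ∑ i, p i ≤ s} := by
  rw [Measure.smul_apply, smul_eq_mul,
    Measure.restrict_apply (measurableSet_le (by fun_prop) measurable_const),
    ← volume_preimage_const_sub_vecMul hdet fun k => p (e.symm k) * (s - c (e.symm k))]
  congr 1
  ext x
  simp only [Set.mem_ofPred_eq, Finset.sup'_le_iff, Finset.mem_univ, true_imp_iff, Set.mem_preimage,
    forall_affine_le_iff hp hL c e]

theorem integral_exp_neg_mul_sup_affine [Nonempty ι] [DecidableEq κ] (hp : ∀ i, 0 < p i)
    (hL : L *ᵥ p = 0) (c : ι → ℝ) (e : {i // i ≠ i₀} ≃ κ) (hdet : (weightedMinor p L e).det ≠ 0)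
    {a : ℝ} (ha : 0 < a) :
    ∫ x : κ → ℝ, Real.exp (-(a * Finset.univ.sup' Finset.univ_nonempty (x ᵥ* L + c))) =
      |(weightedMinor p L e).det|⁻¹ * Real.exp (-(a * (c ⬝ᵥ p / ∑ i, p i))) *
        ((∑ i, p i) / a) ^ Fintype.card κ := by
  have sum_pos : 0 < ∑ i, p i := Finset.sum_pos (fun i _ => hp i) Finset.univ_nonempty
  have measurable_sup : Measurable fun x : κ → ℝ =>
      Finset.univ.sup' Finset.univ_nonempty (x ᵥ* L + c) := by
    refine (Continuous.finset_sup'_apply _ fun i _ => ?_).measurable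
    simp only [Pi.add_apply, vecMul, dotProduct]
    fun_prop
  have factor (u : κ → ℝ) : Real.exp (-(a * ((c ⬝ᵥ p + ∑ k, u k) / ∑ i, p i))) =
      Real.exp (-(a * (c ⬝ᵥ p / ∑ i, p i))) * Real.exp (-((a / ∑ i, p i) * ∑ k, u k)) := by
    rw [← Real.exp_add]
    congr 1
    ring
  rw [integral_exp_neg_mul_eq_of_measure_sublevel_eq measurable_sup (by fun_prop)
    (volume_sup_affine_le hp hL c e hdet) ha, integral_smul_measure,
    ENNReal.toReal_ofReal (by positivity), smul_eq_mul]
  simp_rw [factor]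
  rw [integral_const_mul, integral_Ici_exp_neg_mul_sum (div_pos ha sum_pos), inv_div, mul_assoc]

end MaxOfAffineForms

section Units

open Module
open Matrix hiding rank

variable {K : Type*} [Field K] [NumberField K]

theorem sum_mult_mul_log_eq_log_abs_norm {α : K} (hα : α ≠ 0) :
    ∑ w : InfinitePlace K, (mult w : ℝ) * Real.log (w α) =
      Real.log |(Algebra.norm ℚ α : ℝ)| := by
  have hprod := prod_eq_abs_norm α
  push_cast at hprod
  rw [← hprod, Real.log_prod fun w _ => pow_ne_zero _ (pos_iff.mpr hα).ne']
  simp only [Real.log_pow]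

theorem linearIndependent_real_of_int {ι E : Type*} [Finite ι]
    [NormedAddCommGroup E] [NormedSpace ℝ E] [FiniteDimensional ℝ E] {v : ι → E}
    (hv : LinearIndependent ℤ v) {Λ : Submodule ℤ E} [DiscreteTopology Λ] (hΛ : ∀ i, v i ∈ Λ) :
    LinearIndependent ℝ v := by
  have := Fintype.ofFinite ι
  have hspan : Submodule.span ℤ (Set.range v) ≤ Λ :=
    Submodule.span_le.mpr (Set.range_subset_iff.mpr hΛ)
  have : DiscreteTopology (Submodule.span ℤ (Set.range v)) :=
    DiscreteTopology.of_subset (inferInstanceAs (DiscreteTopology Λ)) hspan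
  rw [linearIndependent_iff_card_eq_finrank_span, Real.finrank_eq_int_finrank_of_discrete this,
    Set.finrank, finrank_span_eq_card hv]

theorem isMaxRank_of_prod_zpow_mem_torsion {η : Fin (rank K) → (𝓞 K)ˣ}
    (hη : ∀ c : Fin (rank K) → ℤ, (∏ j, η j ^ c j) ∈ torsion K → c = 0) : IsMaxRank η := by
  classical
  have int_indep : LinearIndependent ℤ fun j => logEmbedding K (Additive.ofMul (η j)) := by
    refine Fintype.linearIndependent_iff.mpr fun c hc => congrFun (hη c ?_)
    rw [← dirichletUnitTheorem.logEmbedding_eq_zero_iff, ← hc, ofMul_prod, map_sum]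
    simp only [ofMul_zpow, map_zsmul]
  exact linearIndependent_real_of_int int_indep (Λ := unitLattice K)
    fun j => ⟨Additive.ofMul (η j), Submodule.mem_top, rfl⟩

theorem regOfFamily_eq_abs_det (η : Fin (rank K) → (𝓞 K)ˣ) {w' : InfinitePlace K}
    (e : {w : InfinitePlace K // w ≠ w'} ≃ Fin (rank K)) :
    regOfFamily η = |(Matrix.of fun i j : Fin (rank K) =>
      (mult (e.symm j).val : ℝ) * Real.log ((e.symm j).val ((η i : 𝓞 K) : K))).det| := by
  classical
  rw [regOfFamily_eq_det η w' e, ← det_reindex_self e]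
  simp [reindex_apply, submatrix]

theorem prod_rpow_mul_eq_exp {ι : Type*} [Fintype ι] {g : ι → ℝ} (hg : ∀ j, 0 < g j)
    (y : ι → ℝ) {b : ℝ} (hb : 0 < b) :
    (∏ j, g j ^ y j) * b = Real.exp (∑ j, Real.log (g j) * y j + Real.log b) := by
  simp only [Real.exp_add, Real.exp_sum, Real.exp_log hb, Real.rpow_def_of_pos (hg _)]

/-- The matrix of `x ↦ (log ∏ j, w (η j) ^ (x j / m j))_w`, whose weighted minors are, up to the
factors `m j`, those defining the regulator of `η`. -/
noncomputable def scaledLogMatrix {ι : Type*} (η : ι → (𝓞 K)ˣ) (m : ι → ℝ) :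
    Matrix ι (InfinitePlace K) ℝ :=
  of fun j w => (m j)⁻¹ * Real.log (w ((η j : 𝓞 K) : K))

theorem scaledLogMatrix_mulVec_mult {ι : Type*} (η : ι → (𝓞 K)ˣ) (m : ι → ℝ) :
    scaledLogMatrix η m *ᵥ (fun w => (mult w : ℝ)) = 0 := by
  funext j
  calc (scaledLogMatrix η m *ᵥ fun w => (mult w : ℝ)) j
      = (m j)⁻¹ * ∑ w : InfinitePlace K, mult w * Real.log (w ((η j : 𝓞 K) : K)) := by
        simp only [scaledLogMatrix, mulVec, dotProduct, of_apply, Finset.mul_sum, mul_assoc,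
          mul_comm (Real.log _)]
    _ = 0 := by rw [sum_mult_mul_log, mul_zero]

theorem abs_det_weightedMinor_scaledLogMatrix (η : Fin (rank K) → (𝓞 K)ˣ)
    (m : Fin (rank K) → ℝ) {w' : InfinitePlace K} (e : {w // w ≠ w'} ≃ Fin (rank K)) :
    |(weightedMinor (fun w => (mult w : ℝ)) (scaledLogMatrix η m) e).det| =
      |∏ j, m j|⁻¹ * regOfFamily η := by
  rw [regOfFamily_eq_abs_det η e, ← abs_inv, ← abs_mul, ← Finset.prod_inv_distrib,
    ← det_mul_column]
  simp only [weightedMinor, scaledLogMatrix, of_apply, mul_left_comm]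

theorem sup'_prod_rpow_mul_eq_exp {ι : Type*} [Fintype ι] (η : ι → (𝓞 K)ˣ) (m : ι → ℝ)
    {α : K} (hα : α ≠ 0) (x : ι → ℝ) :
    (Finset.univ.sup' Finset.univ_nonempty fun w : InfinitePlace K =>
        (∏ j, w ((η j : 𝓞 K) : K) ^ (x j / m j)) * w α) =
      Real.exp (Finset.univ.sup' Finset.univ_nonempty
        (x ᵥ* scaledLogMatrix η m + fun w => Real.log (w α))) := by
  rw [Finset.apply_sup'_eq_sup'_comp _ Real.exp fun _ _ => Real.exp_monotone.map_max]
  congr 1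
  funext w
  rw [prod_rpow_mul_eq_exp (fun j => pos_at_place (η j) w) _ (pos_iff.mpr hα)]
  simp only [Function.comp_apply, Pi.add_apply, vecMul, dotProduct, scaledLogMatrix, of_apply,
    div_eq_mul_inv, mul_left_comm (Real.log _), mul_comm (Real.log _)]

theorem integral_formula_general {η : Fin (rank K) → (𝓞 K)ˣ} (hη : IsMaxRank η)
    {m : Fin (rank K) → ℝ} (hm : ∀ j, m j ≠ 0) {α : K} (hα : α ≠ 0) {a : ℝ} (ha : 0 < a) :
    ∫ x : Fin (rank K) → ℝ,
      ((Finset.univ.sup' Finset.univ_nonempty fun w : InfinitePlace K =>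
        (∏ j, w ((η j : 𝓞 K) : K) ^ (x j / m j)) * w α) ^ a)⁻¹ =
      |∏ j, m j| / (regOfFamily η * |(Algebra.norm ℚ α : ℝ)| ^ (a / finrank ℚ K)) *
        (finrank ℚ K / a) ^ rank K := by
  classical
  have sum_mult : ∑ w : InfinitePlace K, (mult w : ℝ) = finrank ℚ K := by
    exact_mod_cast sum_mult_eq (K := K)
  have log_weight : (fun w : InfinitePlace K => Real.log (w α)) ⬝ᵥ (fun w => (mult w : ℝ)) =
      Real.log |(Algebra.norm ℚ α : ℝ)| := by
    simp only [dotProduct, mul_comm (Real.log _), sum_mult_mul_log_eq_log_abs_norm hα]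
  have norm_pos : 0 < |(Algebra.norm ℚ α : ℝ)| := by simpa using hα
  have hdet := abs_det_weightedMinor_scaledLogMatrix η m (equivFinRank K).symm
  have det_ne_zero : (weightedMinor (fun w => (mult w : ℝ)) (scaledLogMatrix η m)
      (equivFinRank K).symm).det ≠ 0 := by
    rw [← abs_ne_zero, hdet]
    exact mul_ne_zero (inv_ne_zero (abs_ne_zero.mpr (Finset.prod_ne_zero_iff.mpr fun j _ => hm j)))
      (regOfFamily_ne_zero hη)
  simp_rw [sup'_prod_rpow_mul_eq_exp η m hα, ← Real.exp_mul, ← Real.exp_neg, mul_comm _ a]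
  rw [integral_exp_neg_mul_sup_affine (fun w => by exact_mod_cast mult_pos)
    (scaledLogMatrix_mulVec_mult η m) _ _ det_ne_zero ha, hdet, log_weight, sum_mult,
    Fintype.card_fin, Real.rpow_def_of_pos norm_pos, Real.exp_neg]
  field_simp

end Units

/-- Lemma: with `η₁,…,η_r` a fundamental system for the units `≡ 1 mod* 𝔮₁`,
`m_j = max_i ⌈log|σ_i(η_j)|⌉` and `α ∈ K` nonzero,
`∫_{ℝ^r} dx / (max_i ∏_j |σ_i(η_j)|^{x_j/m_j}·|σ_i(α)|)^{n−1}
  = (m₁⋯m_r / (R_{K,𝔮₁}·|N(α)|^{(n−1)/n}))·(n/(n−1))^r`. -/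
theorem integral_formula (K : Type*) [Field K] [NumberField K]
    (n : ℕ) (hn : n = Module.finrank ℚ K) (hn2 : 2 ≤ n)
    (hr : 1 ≤ rank K)
    (q : Ideal (𝓞 K)) (hq : q ≠ ⊥)
    (U : Subgroup ((𝓞 K)ˣ))
    (hU : ∀ u : (𝓞 K)ˣ, u ∈ U ↔
      ((u : 𝓞 K) - 1 ∈ q ∧ ∀ φ : K →+* ℝ, 0 < φ ((u : 𝓞 K) : K)))
    (η : Fin (rank K) → (𝓞 K)ˣ)
    (hmem : ∀ j, η j ∈ U)
    (hindep : ∀ c : Fin (rank K) → ℤ, (∏ j, η j ^ c j) ∈ torsion K → c = 0)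
    (hgen : ∀ u ∈ U, ∃ ζ ∈ torsion K, ∃ c : Fin (rank K) → ℤ, u = ζ * ∏ j, η j ^ c j)
    (m : Fin (rank K) → ℕ) (hm1 : ∀ j, 1 ≤ m j)
    (hm : ∀ j, (m j : ℤ) = Finset.univ.sup'
      (Finset.univ_nonempty_iff.mpr inferInstance)
      (fun w : InfinitePlace K => ⌈Real.log (w ((η j : 𝓞 K) : K))⌉))
    (α : K) (hα : α ≠ 0)
    (w' : InfinitePlace K) (e : {w : InfinitePlace K // w ≠ w'} ≃ Fin (rank K)) :
    ∫ x : Fin (rank K) → ℝ,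
      (((Finset.univ.sup' (Finset.univ_nonempty_iff.mpr inferInstance)
        (fun w : InfinitePlace K =>
          (∏ j, (w ((η j : 𝓞 K) : K)) ^ ((x j) / (m j : ℝ))) * w α)) ^ (n - 1))⁻¹) =
      (∏ j, (m j : ℝ)) /
        (|(Matrix.of fun i j : Fin (rank K) =>
            (mult (e.symm j).val : ℝ) * Real.log ((e.symm j).val ((η i : 𝓞 K) : K))).det| *
          (|Algebra.norm ℚ α| : ℝ) ^ (((n:ℝ) - 1) / n)) *
        ((n : ℝ) / ((n : ℝ) - 1)) ^ (rank K) := by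
  subst hn
  have hm0 (j : Fin (rank K)) : (m j : ℝ) ≠ 0 := Nat.cast_ne_zero.mpr (Nat.ne_of_gt (hm1 j))
  have hn1 : 0 < ((Module.finrank ℚ K - 1 : ℕ) : ℝ) := Nat.cast_pos.mpr (Nat.sub_pos_of_lt hn2)
  rw [← regOfFamily_eq_abs_det η e, ← Nat.cast_pred Module.finrank_pos]
  simpa only [Real.rpow_natCast, ← Nat.cast_prod, Nat.abs_cast] using
    integral_formula_general (isMaxRank_of_prod_zpow_mem_torsion hindep) hm0 hα hn1
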